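/- arXiv:2107.06650 — 7 statements merged into one kernel-verified Lean document; each statement's English description precedes it below -/
import Mathlib

section
/- Let V > 0, σ > 0, μ ∈ ℝ, c > 0, and let f(b) = c·exp(−(b − μ)²/(2σ²)). Define F(b) = ∫₀ᵇ f(t) dt and s(b) = (V − b)·F(b). Then s''(V) < 0, and s'' has at most one root in the open interval (0, V): for any b₁, b₂ ∈ (0, V) with s''(b₁) = 0 and s''(b₂) = 0, one has b₁ = b₂. -/
/-- For the truncated-normal density (up to a positive constant c),
s''(V) < 0 and s'' has at most one root in (0, V). -/
theorem surplus_second_deriv_truncNormal_roots (V σ μ c : ℝ) (hV : 0 < V) (hσ : 0 < σ)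
    (hc : 0 < c) (f F s : ℝ → ℝ)
    (hf : f = fun b => c * Real.exp (-(b - μ) ^ 2 / (2 * σ ^ 2)))
    (hF : F = fun b => ∫ t in (0 : ℝ)..b, f t)
    (hs : s = fun b => (V - b) * F b) :
    deriv (deriv s) V < 0 ∧
    ∀ b₁ ∈ Set.Ioo (0 : ℝ) V, ∀ b₂ ∈ Set.Ioo (0 : ℝ) V,
      deriv (deriv s) b₁ = 0 → deriv (deriv s) b₂ = 0 → b₁ = b₂ := by
  have hfc : Continuous f := by
    rw [hf]; fun_prop
  have hFd : ∀ b, HasDerivAt F (f b) b := by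
    intro b
    rw [hF]
    exact intervalIntegral.integral_hasDerivAt_right (hfc.intervalIntegrable _ _)
      (hfc.stronglyMeasurableAtFilter _ _) hfc.continuousAt
  have hfd : ∀ b, HasDerivAt f (f b * ((μ - b) / σ ^ 2)) b := by
    intro b
    rw [hf]
    have h1 : HasDerivAt (fun b : ℝ => -(b - μ) ^ 2 / (2 * σ ^ 2))
        (-(2 * (b - μ)) / (2 * σ ^ 2)) b := by
      have := ((((hasDerivAt_id b).sub_const μ).pow 2).neg).div_const (2 * σ ^ 2)
      refine HasDerivAt.congr_deriv this ?_
      simp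
    refine HasDerivAt.congr_deriv ((h1.exp).const_mul c) ?_
    field_simp
    ring
  have hVd : ∀ b, HasDerivAt (fun b : ℝ => V - b) (-1) b := fun b =>
    (hasDerivAt_id b).const_sub V
  have hs1 : deriv s = fun b => -1 * F b + (V - b) * f b := by
    funext b
    rw [hs]
    exact ((hVd b).mul (hFd b)).deriv
  have hs2 : ∀ b, deriv (deriv s) b = f b * ((V - b) * (μ - b) / σ ^ 2 - 2) := by
    intro b
    rw [hs1]
    have h := (((hFd b).const_mul (-1)).add ((hVd b).mul (hfd b))).deriv
    refine Eq.trans h ?_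
    ring
  have hfp : ∀ b, 0 < f b := by
    intro b
    rw [hf]
    positivity
  have hroot : ∀ b, deriv (deriv s) b = 0 → (V - b) * (μ - b) = 2 * σ ^ 2 := by
    intro b hb
    rw [hs2] at hb
    have h := (mul_eq_zero.1 hb).resolve_left (hfp b).ne'
    field_simp at h
    linarith
  have hσ2 : 0 < σ ^ 2 := by positivity
  refine ⟨?_, ?_⟩
  · rw [hs2]
    have := hfp V
    simp only [sub_self, zero_mul, zero_div]
    linarith
  · intro b₁ h₁ b₂ h₂ e₁ e₂
    have r₁ := hroot b₁ e₁
    have r₂ := hroot b₂ e₂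
    have p₁ : 0 < V - b₁ := sub_pos.2 h₁.2
    have p₂ : 0 < V - b₂ := sub_pos.2 h₂.2
    have q₁ : 0 < μ - b₁ := pos_of_mul_pos_right (by rw [r₁]; positivity) p₁.le
    have q₂ : 0 < μ - b₂ := pos_of_mul_pos_right (by rw [r₂]; positivity) p₂.le
    have key : (b₁ - b₂) * ((V - b₁) + (μ - b₂)) = 0 := by linarith
    have := (mul_eq_zero.1 key).resolve_right (by positivity)
    linarith
end

section
/- Let V > 0, α > 0, β > 0, and let f(b) = (β^α / Γ(α))·b^(α−1)·exp(−βb) be the gamma density. Define F(b) = ∫₀ᵇ f(t) dt and s(b) = (V − b)·F(b). Then s''(V) < 0, and s'' has at most one root in the open interval (0, V): for any b₁, b₂ ∈ (0, V) with s''(b₁) = 0 and s''(b₂) = 0, one has b₁ = b₂. -/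
/-- For the gamma density, s''(V) < 0 and s'' has at most one
root in (0, V). -/
theorem surplus_second_deriv_gamma_roots (V α β : ℝ) (hV : 0 < V) (hα : 0 < α)
    (hβ : 0 < β) (f F s : ℝ → ℝ)
    (hf : f = fun b => β ^ α / Real.Gamma α * b ^ (α - 1) * Real.exp (-β * b))
    (hF : F = fun b => ∫ t in (0 : ℝ)..b, f t)
    (hs : s = fun b => (V - b) * F b) :
    deriv (deriv s) V < 0 ∧
    ∀ b₁ ∈ Set.Ioo (0 : ℝ) V, ∀ b₂ ∈ Set.Ioo (0 : ℝ) V,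
      deriv (deriv s) b₁ = 0 → deriv (deriv s) b₂ = 0 → b₁ = b₂ := by
  have hint : ∀ b, IntervalIntegrable f MeasureTheory.volume 0 b := by
    intro b
    rw [hf]
    have h1 : IntervalIntegrable (fun x : ℝ => x ^ (α - 1)) MeasureTheory.volume 0 b :=
      intervalIntegral.intervalIntegrable_rpow' (by linarith)
    have h2 := h1.const_mul (β ^ α / Real.Gamma α)
    exact h2.mul_continuousOn (g := fun x => Real.exp (-β * x)) (by fun_prop)
  have hmeas : Measurable f := by
    rw [hf]; fun_prop
  have hpos : ∀ b, 0 < b → 0 < f b := by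
    intro b hb
    rw [hf]
    have := Real.Gamma_pos_of_pos hα
    positivity
  have hfd : ∀ b, 0 < b → HasDerivAt f (f b * ((α - 1) / b - β)) b := by
    intro b hb
    have h1 : HasDerivAt (fun x : ℝ => x ^ (α - 1)) ((α - 1) * b ^ (α - 1 - 1)) b :=
      Real.hasDerivAt_rpow_const (Or.inl hb.ne')
    have h2 : HasDerivAt (fun x : ℝ => Real.exp (-β * x)) (Real.exp (-β * b) * (-β * 1)) b :=
      ((hasDerivAt_id b).const_mul (-β)).exp
    have h3 := (h1.const_mul (β ^ α / Real.Gamma α)).mul h2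
    rw [hf]
    refine h3.congr_deriv ?_
    rw [Real.rpow_sub_one hb.ne' (α - 1)]
    ring
  have hFd : ∀ b, 0 < b → HasDerivAt F (f b) b := by
    intro b hb
    rw [hF]
    exact intervalIntegral.integral_hasDerivAt_right (hint b)
      hmeas.stronglyMeasurable.stronglyMeasurableAtFilter (hfd b hb).continuousAt
  have hsd : ∀ b, 0 < b → deriv s b = -F b + (V - b) * f b := by
    intro b hb
    have h := ((hasDerivAt_id b).const_sub V).mul (hFd b hb)
    rw [hs]
    refine (h.congr_deriv ?_).deriv
    simp
  have hsdd : ∀ b, 0 < b →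
      deriv (deriv s) b = f b * ((V - b) * ((α - 1) / b - β) - 2) := by
    intro b hb
    have he : deriv s =ᶠ[nhds b] fun b => -F b + (V - b) * f b := by
      filter_upwards [lt_mem_nhds hb] with x hx using hsd x hx
    rw [he.deriv_eq]
    have h := (hFd b hb).neg.add (((hasDerivAt_id b).const_sub V).mul (hfd b hb))
    refine (h.congr_deriv ?_).deriv
    simp
    ring
  refine ⟨?_, ?_⟩
  · rw [hsdd V hV]
    have := hpos V hV
    nlinarith
  · have key : ∀ b, 0 < b → deriv (deriv s) b = 0 →
        (V - b) * ((α - 1) - β * b) = 2 * b := by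
      intro b hb h
      rw [hsdd b hb] at h
      have h' := (mul_eq_zero.mp h).resolve_left (hpos b hb).ne'
      field_simp at h'
      linarith
    intro x hx y hy h1 h2
    have e1 := key x hx.1 h1
    have e2 := key y hy.1 h2
    by_contra hne
    -- subtracting: sum of roots
    have e3 : β * (x + y) = β * V + (α - 1) + 2 := by
      have : (x - y) * (β * (x + y) - (β * V + (α - 1) + 2)) = 0 := by linear_combination e1 - e2
      have := (mul_eq_zero.mp this).resolve_left (sub_ne_zero.mpr hne)
      linarith
    have e4 : β * ((V - x) * (V - y)) = -2 * V := by
      linear_combination -e1 + (x - V) * e3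
    have := mul_pos hβ (mul_pos (sub_pos.mpr hx.2) (sub_pos.mpr hy.2))
    linarith
end

section
/- Let V > 0, σ > 0, μ ∈ ℝ, and let f(b) = (1/(√(2π)·σ·b))·exp(−(ln b − μ)²/(2σ²)) be the log-normal density on (0, ∞). Define F(b) = ∫₀ᵇ f(t) dt and s(b) = (V − b)·F(b). Then for every b > 0, the second derivative of s satisfies s''(b) = (f(b)/(b·σ²))·[(μ − σ² − ln b)(V − b) − 2σ²b]. -/
/-- For the log-normal density, the second derivative of the
expected surplus satisfies
s''(b) = (f(b)/(bσ²)) · ((μ - σ² - ln b)(V - b) - 2σ²b) for all b > 0. -/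
theorem surplus_second_deriv_logNormal (V σ μ : ℝ) (hV : 0 < V) (hσ : 0 < σ)
    (f F s : ℝ → ℝ)
    (hf : f = fun b =>
      1 / (Real.sqrt (2 * Real.pi) * σ * b) * Real.exp (-(Real.log b - μ) ^ 2 / (2 * σ ^ 2)))
    (hF : F = fun b => ∫ t in (0 : ℝ)..b, f t)
    (hs : s = fun b => (V - b) * F b) :
    ∀ b > 0, deriv (deriv s) b =
      f b / (b * σ ^ 2) * ((μ - σ ^ 2 - Real.log b) * (V - b) - 2 * σ ^ 2 * b) := by
  intro b hb
  have hc : 0 < Real.sqrt (2 * Real.pi) := by positivity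
  have hderf : ∀ x > 0, HasDerivAt f (f x / (x * σ ^ 2) * (μ - σ ^ 2 - Real.log x)) x := by
    intro x hx
    have h1 : HasDerivAt (fun b : ℝ => Real.sqrt (2 * Real.pi) * σ * b)
        (Real.sqrt (2 * Real.pi) * σ * 1) x := (hasDerivAt_id' x).const_mul _
    have hne : Real.sqrt (2 * Real.pi) * σ * x ≠ 0 := by positivity
    have h2 := (hasDerivAt_const x (1:ℝ)).fun_div h1 hne
    have h3 := (((((Real.hasDerivAt_log hx.ne').sub_const μ).fun_pow 2).fun_neg).div_const
      (2 * σ ^ 2)).exp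
    have h4 := h2.fun_mul h3
    rw [hf]
    refine h4.congr_deriv ?_
    beta_reduce
    generalize Real.exp (-(Real.log x - μ) ^ 2 / (2 * σ ^ 2)) = e
    have := hx.ne'
    have := hσ.ne'
    have := hc.ne'
    field_simp
    push_cast
    ring
  have hmeas : Measurable f := by
    rw [hf]
    fun_prop
  have hbound : ∀ x > 0, ‖f x‖ ≤ 1 / (Real.sqrt (2 * Real.pi) * σ) * Real.exp (-μ + σ ^ 2 / 2) := by
    intro x hx
    have hxx : f x = 1 / (Real.sqrt (2 * Real.pi) * σ) *
        Real.exp (-Real.log x + -(Real.log x - μ) ^ 2 / (2 * σ ^ 2)) := by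
      rw [hf, Real.exp_add, Real.exp_neg, Real.exp_log hx]
      field_simp
    rw [hxx, Real.norm_of_nonneg (by positivity)]
    refine mul_le_mul_of_nonneg_left (Real.exp_le_exp.mpr ?_) (by positivity)
    have : -μ + σ ^ 2 / 2 - (-Real.log x + -(Real.log x - μ) ^ 2 / (2 * σ ^ 2))
        = (Real.log x - μ + σ ^ 2) ^ 2 / (2 * σ ^ 2) := by
      field_simp
      ring
    have h0 : 0 ≤ (Real.log x - μ + σ ^ 2) ^ 2 / (2 * σ ^ 2) := by positivity
    linarith
  have hint : ∀ x > 0, IntervalIntegrable f MeasureTheory.volume 0 x := by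
    intro x hx
    rw [intervalIntegrable_iff_integrableOn_Ioc_of_le hx.le]
    refine MeasureTheory.Measure.integrableOn_of_bounded (by simp)
      hmeas.aestronglyMeasurable
      (M := 1 / (Real.sqrt (2 * Real.pi) * σ) * Real.exp (-μ + σ ^ 2 / 2)) ?_
    filter_upwards [MeasureTheory.ae_restrict_mem measurableSet_Ioc] with y hy
    exact hbound y hy.1
  have hderF : ∀ x > 0, HasDerivAt F (f x) x := by
    intro x hx
    rw [hF]
    exact intervalIntegral.integral_hasDerivAt_right (hint x hx)
      hmeas.stronglyMeasurable.stronglyMeasurableAtFilter (hderf x hx).continuousAt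
  have hders : ∀ x > 0, HasDerivAt s (-1 * F x + (V - x) * f x) x := by
    intro x hx
    rw [hs]
    exact ((hasDerivAt_id' x).const_sub V).fun_mul (hderF x hx)
  have hev : deriv s =ᶠ[nhds b] fun x => -1 * F x + (V - x) * f x := by
    filter_upwards [lt_mem_nhds hb] with x hx
    exact (hders x hx).deriv
  rw [hev.deriv_eq]
  have h5 := ((hderF b hb).const_mul (-1)).fun_add
    (((hasDerivAt_id' b).const_sub V).fun_mul (hderf b hb))
  rw [h5.deriv]
  field_simp
  ring
end

section
/- Let V > 0, σ > 0, μ ∈ ℝ, and let f(b) = (1/(√(2π)·σ·b))·exp(−(ln b − μ)²/(2σ²)) be the log-normal density. Define F(b) = ∫₀ᵇ f(t) dt and s(b) = (V − b)·F(b). Then s''(V) < 0, and s'' has at most one root in the open interval (0, V): for any b₁, b₂ ∈ (0, V) with s''(b₁) = 0 and s''(b₂) = 0, one has b₁ = b₂. -/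
/-- For the log-normal density, s''(V) < 0 and s'' has at most
one root in (0, V). -/
theorem surplus_second_deriv_logNormal_roots (V σ μ : ℝ) (hV : 0 < V) (hσ : 0 < σ)
    (f F s : ℝ → ℝ)
    (hf : f = fun b =>
      1 / (Real.sqrt (2 * Real.pi) * σ * b) * Real.exp (-(Real.log b - μ) ^ 2 / (2 * σ ^ 2)))
    (hF : F = fun b => ∫ t in (0 : ℝ)..b, f t)
    (hs : s = fun b => (V - b) * F b) :
    deriv (deriv s) V < 0 ∧
    ∀ b₁ ∈ Set.Ioo (0 : ℝ) V, ∀ b₂ ∈ Set.Ioo (0 : ℝ) V,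
      deriv (deriv s) b₁ = 0 → deriv (deriv s) b₂ = 0 → b₁ = b₂ := by
  have hC : 0 < Real.sqrt (2 * Real.pi) := Real.sqrt_pos.mpr (by positivity)
  set C := Real.sqrt (2 * Real.pi) with hCdef
  have hfpos : ∀ b, 0 < b → 0 < f b := by
    intro b hb
    rw [hf]
    positivity
  have hmeas : Measurable f := by
    rw [hf]
    fun_prop
  have hbound : ∀ t, 0 < t → ‖f t‖ ≤ 1 / (C * σ) * Real.exp (σ ^ 2 / 2 - μ) := by
    intro t ht
    rw [Real.norm_of_nonneg (hfpos t ht).le]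
    have e : f t = 1 / (C * σ) * Real.exp (-Real.log t + -(Real.log t - μ) ^ 2 / (2 * σ ^ 2)) := by
      rw [hf, Real.exp_add, Real.exp_neg, Real.exp_log ht]
      field_simp
    rw [e]
    gcongr
    have : σ ^ 2 / 2 - μ - (-Real.log t + -(Real.log t - μ) ^ 2 / (2 * σ ^ 2))
        = (Real.log t - μ + σ ^ 2) ^ 2 / (2 * σ ^ 2) := by
      field_simp
      ring
    have h2 : 0 ≤ (Real.log t - μ + σ ^ 2) ^ 2 / (2 * σ ^ 2) := by positivity
    linarith
  have hint : ∀ b, 0 < b → IntervalIntegrable f MeasureTheory.volume 0 b := by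
    intro b hb
    rw [intervalIntegrable_iff_integrableOn_Ioc_of_le hb.le]
    refine MeasureTheory.Measure.integrableOn_of_bounded (M := 1 / (C * σ) * Real.exp (σ ^ 2 / 2 - μ))
      (by simp) hmeas.aestronglyMeasurable ?_
    filter_upwards [MeasureTheory.ae_restrict_mem measurableSet_Ioc] with t ht
    exact hbound t ht.1
  have hfd : ∀ b, 0 < b →
      HasDerivAt f (-(f b / b) * (1 + (Real.log b - μ) / σ ^ 2)) b := by
    intro b hb
    have h1 : HasDerivAt (fun b => -(Real.log b - μ) ^ 2 / (2 * σ ^ 2))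
        (-(2 * (Real.log b - μ) * b⁻¹) / (2 * σ ^ 2)) b := by
      have := ((((Real.hasDerivAt_log hb.ne').sub_const μ).pow 2).neg).div_const (2 * σ ^ 2)
      refine HasDerivAt.congr_deriv this ?_
      norm_num
    have h2 : HasDerivAt (fun b => 1 / (C * σ * b)) (-(C * σ) / (C * σ * b) ^ 2) b := by
      have := ((hasDerivAt_id b).const_mul (C * σ)).inv (by simp; exact ⟨⟨hC.ne', hσ.ne'⟩, hb.ne'⟩)
      simp only [one_div]
      refine HasDerivAt.congr_deriv this ?_
      simp
    have h3 := h2.mul h1.exp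
    rw [hf]
    refine HasDerivAt.congr_deriv h3 ?_
    field_simp
    ring
  have hFd : ∀ b, 0 < b → HasDerivAt F (f b) b := by
    intro b hb
    rw [hF]
    exact intervalIntegral.integral_hasDerivAt_right (hint b hb)
      hmeas.stronglyMeasurable.stronglyMeasurableAtFilter (hfd b hb).continuousAt
  have hsd : ∀ b, 0 < b → HasDerivAt s (-F b + (V - b) * f b) b := by
    intro b hb
    rw [hs]
    have := ((hasDerivAt_id b).const_sub V).mul (hFd b hb)
    refine HasDerivAt.congr_deriv this ?_
    simp
  have hsdd : ∀ b, 0 < b → deriv (deriv s) b =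
      -(2 * f b) - (V - b) * ((f b / b) * (1 + (Real.log b - μ) / σ ^ 2)) := by
    intro b hb
    have he : deriv s =ᶠ[nhds b] fun b => -F b + (V - b) * f b := by
      filter_upwards [lt_mem_nhds hb] with x hx
      exact (hsd x hx).deriv
    rw [he.deriv_eq]
    have := (hFd b hb).neg.add (((hasDerivAt_id b).const_sub V).mul (hfd b hb))
    refine HasDerivAt.deriv ?_
    refine HasDerivAt.congr_deriv this ?_
    simp
    ring
  have key : ∀ b ∈ Set.Ioo (0 : ℝ) V, deriv (deriv s) b = 0 →
      2 * b + (V - b) * (1 + (Real.log b - μ) / σ ^ 2) = 0 := by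
    intro b hb h
    rw [hsdd b hb.1] at h
    have hb0 := hb.1
    have hfb := hfpos b hb.1
    have : (f b / b) * (2 * b + (V - b) * (1 + (Real.log b - μ) / σ ^ 2)) = 0 := by
      have e : f b / b * b = f b := by field_simp
      linear_combination -h + 2 * e
    exact (mul_eq_zero.mp this).resolve_left (by positivity)
  have main : ∀ a ∈ Set.Ioo (0 : ℝ) V, ∀ b ∈ Set.Ioo (0 : ℝ) V,
      deriv (deriv s) a = 0 → deriv (deriv s) b = 0 → ¬ a < b := by
    intro a ha b hb h1 h2 hab
    have k1 := key a ha h1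
    have k2 := key b hb h2
    have hl : (1 + (Real.log a - μ) / σ ^ 2) < (1 + (Real.log b - μ) / σ ^ 2) := by
      have := Real.log_lt_log ha.1 hab
      gcongr
    generalize (1 + (Real.log a - μ) / σ ^ 2) = p at *
    generalize (1 + (Real.log b - μ) / σ ^ 2) = q at *
    have hVa : 0 < V - a := sub_pos.mpr ha.2
    have hVb : 0 < V - b := sub_pos.mpr hb.2
    have := mul_pos (mul_pos hVa hVb) (sub_pos.mpr hl)
    have h5 : (V - a) * (V - b) * (q - p) = -2 * V * (b - a) := by
      linear_combination (V - a) * k2 - (V - b) * k1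
    have := mul_pos hV (sub_pos.mpr hab)
    linarith
  refine ⟨?_, ?_⟩
  · rw [hsdd V hV]
    have := hfpos V hV
    simp [this]
  · intro a ha b hb h1 h2
    exact le_antisymm (not_lt.mp (main b hb a ha h2 h1)) (not_lt.mp (main a ha b hb h1 h2))
end

section
/- Let V > 0, σ > 0, μ ∈ ℝ, and let f be the normal density with mean μ and variance σ² truncated to (0, ∞): f(b) = exp(−(b − μ)²/(2σ²)) / (√(2π)·σ·(1 − Φ(−μ/σ))) for b > 0, where Φ is the standard normal CDF. Define F(b) = ∫₀ᵇ f(t) dt and s(b) = (V − b)·F(b). Then s attains a global maximum over [0, V] at some point b* ∈ (0, V), and no point of (0, V) is a local minimum of s on (0, V). -/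
open MeasureTheory

lemma aux_key (σ μ a b : ℝ) (hσ : 0 < σ) (ha : 0 < a) (hab : a < b) :
    (∫ t in (0:ℝ)..a, Real.exp (-(t - μ) ^ 2 / (2 * σ ^ 2))) * Real.exp (-(b - μ) ^ 2 / (2 * σ ^ 2))
    ≤ Real.exp (-(a - μ) ^ 2 / (2 * σ ^ 2)) *
      ∫ t in (0:ℝ)..b, Real.exp (-(t - μ) ^ 2 / (2 * σ ^ 2)) := by
  have hc : Continuous fun t : ℝ => Real.exp (-(t - μ) ^ 2 / (2 * σ ^ 2)) := by fun_prop
  have h1 : ∫ t in (0:ℝ)..a, Real.exp (-((t + (b - a)) - μ) ^ 2 / (2 * σ ^ 2)) =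
      ∫ t in (b-a)..b, Real.exp (-(t - μ) ^ 2 / (2 * σ ^ 2)) := by
    rw [intervalIntegral.integral_comp_add_right
      (fun t : ℝ => Real.exp (-(t - μ) ^ 2 / (2 * σ ^ 2)))]
    congr 1 <;> ring
  have h2 := intervalIntegral.integral_add_adjacent_intervals
    (hc.intervalIntegrable (μ := volume) 0 (b-a)) (hc.intervalIntegrable (μ := volume) (b-a) b)
  have h3 : 0 ≤ ∫ t in (0:ℝ)..(b-a), Real.exp (-(t - μ) ^ 2 / (2 * σ ^ 2)) :=
    intervalIntegral.integral_nonneg (by linarith) (fun t _ => (Real.exp_pos _).le)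
  have h4 : (∫ t in (0:ℝ)..a, Real.exp (-(t - μ) ^ 2 / (2 * σ ^ 2))) *
      Real.exp (-(b - μ) ^ 2 / (2 * σ ^ 2)) ≤ Real.exp (-(a - μ) ^ 2 / (2 * σ ^ 2)) *
      ∫ t in (0:ℝ)..a, Real.exp (-((t + (b - a)) - μ) ^ 2 / (2 * σ ^ 2)) := by
    rw [← intervalIntegral.integral_mul_const, ← intervalIntegral.integral_const_mul]
    apply intervalIntegral.integral_mono_on ha.le
    · exact Continuous.intervalIntegrable (by fun_prop) _ _
    · exact Continuous.intervalIntegrable (by fun_prop) _ _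
    · intro t ht
      rw [← Real.exp_add, ← Real.exp_add, Real.exp_le_exp, ← add_div, ← add_div]
      apply div_le_div_of_nonneg_right _ (by positivity)
      nlinarith [mul_nonneg (sub_nonneg.2 ht.2) (sub_nonneg.2 hab.le)]
  refine h4.trans (mul_le_mul_of_nonneg_left ?_ (Real.exp_pos _).le)
  linarith

lemma aux_Phi (x : ℝ) :
    (Real.sqrt (2 * Real.pi))⁻¹ * ∫ t in Set.Iic x, Real.exp (-t ^ 2 / 2) < 1 := by
  have he : (fun t : ℝ => Real.exp (-t ^ 2 / 2)) = fun t : ℝ => Real.exp (-(1/2) * t ^ 2) := by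
    ext t; congr 1; ring
  have hint : Integrable (fun t : ℝ => Real.exp (-t ^ 2 / 2)) := by
    rw [he]; exact integrable_exp_neg_mul_sq (by norm_num)
  have htot : ∫ t : ℝ, Real.exp (-t ^ 2 / 2) = Real.sqrt (2 * Real.pi) := by
    rw [he, integral_gaussian]; congr 1; ring
  have hadd := intervalIntegral.integral_Iic_add_Ioi (b := x) hint.integrableOn hint.integrableOn
  have hpos : 0 < ∫ t in Set.Ioi x, Real.exp (-t ^ 2 / 2) := by
    rw [setIntegral_pos_iff_support_of_nonneg_ae
      (Filter.Eventually.of_forall fun t => (Real.exp_pos _).le) hint.integrableOn]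
    have : Function.support (fun t : ℝ => Real.exp (-t ^ 2 / 2)) = Set.univ := by
      ext t; simp
    rw [this]; simp
  have hp : 0 < Real.sqrt (2 * Real.pi) := by positivity
  rw [inv_mul_lt_iff₀ hp]
  linarith


open MeasureTheory

/-- For the normal density with mean μ and variance σ² truncated
to (0, ∞), the expected surplus s attains a global maximum over [0, V] at some
b* ∈ (0, V), and no point of (0, V) is a local minimum of s on (0, V).
Here Φ is the standard normal CDF. -/
theorem surplus_global_max_truncNormal (V σ μ : ℝ) (hV : 0 < V) (hσ : 0 < σ)
    (Φ f F s : ℝ → ℝ)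
    (hΦ : Φ = fun x => (Real.sqrt (2 * Real.pi))⁻¹ * ∫ t in Set.Iic x, Real.exp (-t ^ 2 / 2))
    (hf : f = fun b =>
      Real.exp (-(b - μ) ^ 2 / (2 * σ ^ 2)) / (Real.sqrt (2 * Real.pi) * σ * (1 - Φ (-μ / σ))))
    (hF : F = fun b => ∫ t in (0 : ℝ)..b, f t)
    (hs : s = fun b => (V - b) * F b) :
    (∃ bStar ∈ Set.Ioo (0 : ℝ) V, ∀ b ∈ Set.Icc (0 : ℝ) V, s b ≤ s bStar) ∧
    ∀ b ∈ Set.Ioo (0 : ℝ) V, ¬ IsLocalMinOn s (Set.Ioo (0 : ℝ) V) b := by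
  have hΦ1 : 0 < 1 - Φ (-μ / σ) := by
    rw [hΦ]; exact sub_pos.2 (aux_Phi _)
  have hfc : Continuous f := by rw [hf]; fun_prop
  have hD : 0 < Real.sqrt (2 * Real.pi) * σ * (1 - Φ (-μ / σ)) := by positivity
  have hfpos : ∀ t, 0 < f t := by intro t; rw [hf]; exact div_pos (Real.exp_pos _) hD
  have hkey : ∀ a b, 0 < a → a < b → F a * f b ≤ f a * F b := by
    intro a b ha hab
    simp only [hF, hf, intervalIntegral.integral_div]
    rw [div_mul_div_comm, div_mul_div_comm]
    exact div_le_div_of_nonneg_right (aux_key σ μ a b hσ ha hab) (by positivity)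
  have hFd : ∀ b, HasDerivAt F (f b) b := by
    intro b; rw [hF]; exact hfc.integral_hasStrictDerivAt 0 b |>.hasDerivAt
  have hFpos : ∀ b, 0 < b → 0 < F b := by
    intro b hb; rw [hF]
    exact intervalIntegral.intervalIntegral_pos_of_pos (hfc.intervalIntegrable _ _) hfpos hb
  have hF0 : F 0 = 0 := by rw [hF]; simp
  have hsd : ∀ b, HasDerivAt s ((V - b) * f b - F b) b := by
    intro b; rw [hs]
    have := ((hasDerivAt_id b).const_sub V).mul (hFd b)
    refine HasDerivAt.congr_deriv (f' := -1 * F b + (V - b) * f b) this ?_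
    ring
  have hsc : Continuous s := continuous_iff_continuousAt.2 fun b => (hsd b).continuousAt
  refine ⟨?_, ?_⟩
  · obtain ⟨m, hm, hmax⟩ := isCompact_Icc.exists_isMaxOn (Set.nonempty_Icc.2 hV.le)
      hsc.continuousOn
    have hhalf : 0 < s (V / 2) := by
      rw [hs]; exact mul_pos (by linarith) (hFpos _ (by linarith))
    have hge : s (V / 2) ≤ s m := hmax ⟨by linarith, by linarith⟩
    refine ⟨m, ⟨lt_of_le_of_ne hm.1 ?_, lt_of_le_of_ne hm.2 ?_⟩, fun b hb => hmax hb⟩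
    · rintro rfl
      have : s 0 = 0 := by rw [hs]; simp [hF0]
      linarith
    · rintro rfl
      have : s m = 0 := by rw [hs]; simp
      linarith
  · intro b hb hmin
    have hmin' : IsLocalMin s b := hmin.isLocalMin (isOpen_Ioo.mem_nhds hb)
    have h0 := hmin'.hasDerivAt_eq_zero (hsd b)
    have hanti : StrictAntiOn s (Set.Icc b V) := by
      apply strictAntiOn_of_deriv_neg (convex_Icc _ _) hsc.continuousOn
      intro y hy
      rw [interior_Icc] at hy
      rw [(hsd y).deriv]
      have hk := hkey b y hb.1 hy.1
      have hFb : F b = (V - b) * f b := by linarith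
      rw [hFb] at hk
      have h5 : (V - b) * f y ≤ F y := by
        have : f b * ((V - b) * f y) ≤ f b * F y := by linarith
        exact le_of_mul_le_mul_left this (hfpos b)
      have h6 := mul_pos (sub_pos.2 hy.1) (hfpos y)
      nlinarith
    have hev : ∀ᶠ y in nhdsWithin b (Set.Ioi b), s b ≤ s y := nhdsWithin_le_nhds hmin'
    obtain ⟨y, h1, h2⟩ := (hev.and (Ioo_mem_nhdsGT hb.2)).exists
    have := hanti ⟨le_rfl, hb.2.le⟩ ⟨h2.1.le, h2.2.le⟩ h2.1
    linarith
end

section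
/- Let V > 0, α > 0, β > 0, and let f(b) = (β^α / Γ(α))·b^(α−1)·exp(−βb) be the gamma density. Define F(b) = ∫₀ᵇ f(t) dt and s(b) = (V − b)·F(b). Then s attains a global maximum over [0, V] at some point b* ∈ (0, V), and no point of (0, V) is a local minimum of s on (0, V). -/
/-- For the gamma density f(b) = β^α/Γ(α) · b^(α-1) · exp(-βb),
the expected surplus s attains a global maximum over [0, V] at some
b* ∈ (0, V), and no point of (0, V) is a local minimum of s on (0, V). -/
theorem surplus_global_max_gamma (V α β : ℝ) (hV : 0 < V) (hα : 0 < α) (hβ : 0 < β)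
    (f F s : ℝ → ℝ)
    (hf : f = fun b => β ^ α / Real.Gamma α * b ^ (α - 1) * Real.exp (-β * b))
    (hF : F = fun b => ∫ t in (0 : ℝ)..b, f t)
    (hs : s = fun b => (V - b) * F b) :
    (∃ bStar ∈ Set.Ioo (0 : ℝ) V, ∀ b ∈ Set.Icc (0 : ℝ) V, s b ≤ s bStar) ∧
    ∀ b ∈ Set.Ioo (0 : ℝ) V, ¬ IsLocalMinOn s (Set.Ioo (0 : ℝ) V) b := by
  have hc : 0 < β ^ α / Real.Gamma α :=
    div_pos (Real.rpow_pos_of_pos hβ _) (Real.Gamma_pos_of_pos hα)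
  have hfint : ∀ a b, IntervalIntegrable f MeasureTheory.volume a b := by
    intro a b
    rw [hf]
    have h1 := (intervalIntegral.intervalIntegrable_rpow' (a := a) (b := b)
      (show -1 < α - 1 by linarith)).const_mul (β ^ α / Real.Gamma α)
    exact h1.mul_continuousOn (by fun_prop)
  have hfpos : ∀ b, 0 < b → 0 < f b := by
    intro b hb
    rw [hf]
    have := Real.rpow_pos_of_pos hb (α - 1)
    positivity
  have hFcont : Continuous F := by
    rw [hF]
    exact intervalIntegral.continuous_primitive hfint 0
  have hfc : ∀ b, 0 < b → ContinuousAt f b := by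
    intro b hb
    rw [hf]
    have : ContinuousAt (fun x : ℝ => x ^ (α - 1)) b :=
      Real.continuousAt_rpow_const _ _ (Or.inl hb.ne')
    fun_prop
  have hfco : ContinuousOn f (Set.Ioi 0) := fun b hb => (hfc b hb).continuousWithinAt
  have hF' : ∀ b, 0 < b → HasDerivAt F (f b) b := by
    intro b hb
    rw [hF]
    exact intervalIntegral.integral_hasDerivAt_right (hfint 0 b)
      (hfco.stronglyMeasurableAtFilter isOpen_Ioi b hb) (hfc b hb)
  have hs' : ∀ b, 0 < b → HasDerivAt s ((V - b) * f b - F b) b := by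
    intro b hb
    rw [hs]
    have h := ((hasDerivAt_id b).const_sub V).mul (hF' b hb)
    have e : (V - b) * f b - F b = -1 * F b + (V - id b) * f b := by
      simp only [id]; ring
    rw [e]
    exact h
  have hscont : Continuous s := by
    rw [hs]; fun_prop
  have hF0 : F 0 = 0 := by simp [hF]
  have hFpos : ∀ b, 0 < b → 0 < F b := by
    intro b hb
    rw [hF]
    exact intervalIntegral.intervalIntegral_pos_of_pos_on (hfint 0 b)
      (fun x hx => hfpos x hx.1) hb
  refine ⟨?_, ?_⟩
  · obtain ⟨m, hm, hmax⟩ := isCompact_Icc.exists_isMaxOn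
      (Set.nonempty_Icc.2 hV.le) hscont.continuousOn
    have hpos : 0 < s m := by
      have h1 : s (V / 2) ≤ s m := hmax ⟨by linarith, by linarith⟩
      have h2 : 0 < s (V / 2) := by
        rw [hs]
        exact mul_pos (by linarith) (hFpos _ (by linarith))
      linarith
    refine ⟨m, ⟨lt_of_le_of_ne hm.1 ?_, lt_of_le_of_ne hm.2 ?_⟩, fun b hb => hmax hb⟩
    · rintro rfl
      simp [hs, hF0] at hpos
    · rintro rfl
      simp [hs] at hpos
  · let H : ℝ → ℝ := fun b =>
      ∫ u in (0 : ℝ)..1, u ^ (α - 1) * (b * Real.exp (β * b * (1 - u)))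
    have hHint : ∀ b, IntervalIntegrable
        (fun u : ℝ => u ^ (α - 1) * (b * Real.exp (β * b * (1 - u))))
        MeasureTheory.volume 0 1 := by
      intro b
      exact (intervalIntegral.intervalIntegrable_rpow'
        (show -1 < α - 1 by linarith)).mul_continuousOn (by fun_prop)
    have hHmono : ∀ x y, 0 < x → x ≤ y → H x ≤ H y := by
      intro x y hx hxy
      refine intervalIntegral.integral_mono_on zero_le_one (hHint x) (hHint y) ?_
      intro u hu
      have h1 : 0 ≤ 1 - u := by linarith [hu.2]
      have h0 : 0 ≤ u := hu.1
      have hy : 0 ≤ y := hx.le.trans hxy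
      gcongr
    have hFH : ∀ b, 0 < b → F b = f b * H b := by
      intro b hb
      have h1 := intervalIntegral.mul_integral_comp_mul_left (a := 0) (b := 1) (f := f) b
      rw [mul_zero, mul_one] at h1
      have h2 : F b = b * ∫ x in (0 : ℝ)..1, f (b * x) := by rw [h1, hF]
      rw [h2, ← intervalIntegral.integral_const_mul, ← intervalIntegral.integral_const_mul]
      refine intervalIntegral.integral_congr ?_
      intro u hu
      rw [Set.uIcc_of_le zero_le_one] at hu
      have h3 : Real.exp (-β * (b * u)) = Real.exp (-β * b) * Real.exp (β * b * (1 - u)) := by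
        rw [← Real.exp_add]; congr 1; ring
      simp only [hf]
      rw [h3, Real.mul_rpow hb.le hu.1]
      ring
    intro b hb hmin
    have hloc : IsLocalMin s b := hmin.isLocalMin (isOpen_Ioo.mem_nhds hb)
    have h0 := hloc.hasDerivAt_eq_zero (hs' b hb.1)
    have hHb : V - b = H b := by
      rw [hFH b hb.1] at h0
      have : f b * ((V - b) - H b) = 0 := by linarith
      rcases mul_eq_zero.1 this with h | h
      · exact absurd h (hfpos b hb.1).ne'
      · linarith
    have hanti : StrictAntiOn s (Set.Ici b) := by
      refine strictAntiOn_of_deriv_neg (convex_Ici b) hscont.continuousOn ?_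
      intro x hx
      rw [interior_Ici] at hx
      have hbx : b < x := hx
      have hx0 : 0 < x := hb.1.trans hbx
      rw [(hs' x hx0).deriv, hFH x hx0]
      have := hHmono b x hb.1 hbx.le
      have := mul_pos (hfpos x hx0) (show 0 < H x - (V - x) by linarith)
      linarith
    have hev : ∀ᶠ x in nhdsWithin b (Set.Ioi b), s b ≤ s x :=
      hloc.filter_mono nhdsWithin_le_nhds
    obtain ⟨x, hx1, hx2⟩ := (hev.and self_mem_nhdsWithin).exists
    have hx2' : b < x := hx2
    have := hanti (Set.mem_Ici.2 le_rfl) (Set.mem_Ici.2 hx2'.le) hx2'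
    linarith
end

section
/- Let V > 0, σ > 0, μ ∈ ℝ, and let f(b) = (1/(√(2π)·σ·b))·exp(−(ln b − μ)²/(2σ²)) be the log-normal density on (0, ∞). Define F(b) = ∫₀ᵇ f(t) dt and s(b) = (V − b)·F(b). Then s attains a global maximum over [0, V] at some point b* ∈ (0, V), and no point of (0, V) is a local minimum of s on (0, V). -/
/-- For the log-normal density, the expected surplus s attains a
global maximum over [0, V] at some b* ∈ (0, V), and no point of (0, V) is a
local minimum of s on (0, V). -/
theorem surplus_global_max_logNormal (V σ μ : ℝ) (hV : 0 < V) (hσ : 0 < σ)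
    (f F s : ℝ → ℝ)
    (hf : f = fun b =>
      1 / (Real.sqrt (2 * Real.pi) * σ * b) * Real.exp (-(Real.log b - μ) ^ 2 / (2 * σ ^ 2)))
    (hF : F = fun b => ∫ t in (0 : ℝ)..b, f t)
    (hs : s = fun b => (V - b) * F b) :
    (∃ bStar ∈ Set.Ioo (0 : ℝ) V, ∀ b ∈ Set.Icc (0 : ℝ) V, s b ≤ s bStar) ∧
    ∀ b ∈ Set.Ioo (0 : ℝ) V, ¬ IsLocalMinOn s (Set.Ioo (0 : ℝ) V) b := by
  have hC : 0 < Real.sqrt (2 * Real.pi) := Real.sqrt_pos.2 (by positivity)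
  have hfpos : ∀ b, 0 < b → 0 < f b := by
    intro b hb
    rw [hf]
    positivity
  obtain ⟨M, hM0, hM⟩ : ∃ M : ℝ, 0 < M ∧ ∀ b, 0 < b → f b ≤ M := by
    refine ⟨1 / (Real.sqrt (2 * Real.pi) * σ) * Real.exp (σ ^ 2 / 2 - μ), by positivity, ?_⟩
    intro b hb
    have h1 : f b = 1 / (Real.sqrt (2 * Real.pi) * σ) *
        Real.exp (-(Real.log b - μ) ^ 2 / (2 * σ ^ 2) - Real.log b) := by
      rw [hf, Real.exp_sub, Real.exp_log hb]
      field_simp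
    rw [h1]
    refine mul_le_mul_of_nonneg_left (Real.exp_le_exp.2 ?_) (by positivity)
    have h2 : σ ^ 2 / 2 - μ - (-(Real.log b - μ) ^ 2 / (2 * σ ^ 2) - Real.log b)
        = (Real.log b - μ + σ ^ 2) ^ 2 / (2 * σ ^ 2) := by
      field_simp
      ring
    have h3 : 0 ≤ (Real.log b - μ + σ ^ 2) ^ 2 / (2 * σ ^ 2) := by positivity
    linarith
  have hmeas : Measurable f := by
    rw [hf]
    fun_prop
  have hint : ∀ b, 0 ≤ b → IntervalIntegrable f MeasureTheory.volume 0 b := by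
    intro b hb
    refine (intervalIntegrable_const (c := M)).mono_fun' hmeas.aestronglyMeasurable ?_
    rw [Set.uIoc_of_le hb]
    refine (MeasureTheory.ae_restrict_iff' measurableSet_Ioc).2 (Filter.Eventually.of_forall ?_)
    intro x hx
    simp only
    rw [Real.norm_of_nonneg (hfpos x hx.1).le]
    exact hM x hx.1
  have hf' : ∀ b, 0 < b → HasDerivAt f (-(f b) * (1 + (Real.log b - μ) / σ ^ 2) / b) b := by
    intro b hb
    have hl := Real.hasDerivAt_log hb.ne'
    have h1 := ((((hl.sub_const μ).pow 2).neg.div_const (2 * σ ^ 2)).exp)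
    have h2 := (((hasDerivAt_id b).const_mul (Real.sqrt (2 * Real.pi) * σ)).inv
      (by simp only [id]; positivity)).mul h1
    rw [hf]
    refine (h2.congr_deriv ?_).congr_of_eventuallyEq (Filter.Eventually.of_forall fun y => ?_)
    rotate_left
    · simp
    · simp
      field_simp
      ring
  have hF' : ∀ b, 0 < b → HasDerivAt F (f b) b := by
    intro b hb
    rw [hF]
    exact intervalIntegral.integral_hasDerivAt_right (hint b hb.le)
      hmeas.stronglyMeasurable.stronglyMeasurableAtFilter (hf' b hb).continuousAt
  have hFpos : ∀ b, 0 < b → 0 < F b := by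
    intro b hb
    rw [hF]
    exact intervalIntegral.intervalIntegral_pos_of_pos_on (hint b hb.le)
      (fun x hx => hfpos x hx.1) hb
  have hFM : ∀ b, 0 < b → F b ≤ M * b := by
    intro b hb
    have h := intervalIntegral.integral_mono_on_of_le_Ioo hb.le (hint b hb.le)
      (intervalIntegrable_const (c := M)) (fun x hx => hM x hx.1)
    rw [hF]
    simp only [intervalIntegral.integral_const, smul_eq_mul, sub_zero] at h
    linarith
  have hF0 : F 0 = 0 := by simp [hF]
  have hK' : ∀ b, 0 < b →
      HasDerivAt (fun b => σ ^ 2 * (b * f b) + (Real.log b - μ) * F b) (F b / b) b := by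
    intro b hb
    have h := (((hasDerivAt_id b).mul (hf' b hb)).const_mul (σ ^ 2)).add
      (((Real.hasDerivAt_log hb.ne').sub_const μ).mul (hF' b hb))
    refine h.congr_deriv ?_
    simp
    field_simp
    ring
  have hKmono : MonotoneOn (fun b => σ ^ 2 * (b * f b) + (Real.log b - μ) * F b)
      (Set.Ioi 0) := by
    apply monotoneOn_of_deriv_nonneg (convex_Ioi 0)
    · intro x hx
      exact (hK' x hx).continuousAt.continuousWithinAt
    · intro x hx
      rw [interior_Ioi] at hx
      exact (hK' x hx).differentiableAt.differentiableWithinAt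
    · intro x hx
      rw [interior_Ioi] at hx
      rw [(hK' x hx).deriv]
      exact (div_pos (hFpos x hx) hx).le
  have hK : ∀ b, 0 < b → 0 ≤ σ ^ 2 * (b * f b) + (Real.log b - μ) * F b := by
    intro b hb
    have hlim : Filter.Tendsto (fun e : ℝ => M * (Real.log e * e) - μ * M * e)
        (nhdsWithin 0 (Set.Ioi 0)) (nhds (M * 0 - μ * M * 0)) := by
      refine (Filter.Tendsto.const_mul M ?_).sub (Filter.Tendsto.const_mul (μ * M) ?_)
      · simpa using tendsto_log_mul_rpow_nhdsGT_zero (r := 1) one_pos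
      · exact tendsto_nhdsWithin_of_tendsto_nhds Filter.tendsto_id
    have h0 : M * 0 - μ * M * 0 = 0 := by ring
    rw [h0] at hlim
    refine le_of_tendsto hlim ?_
    have hm : 0 < min b (Real.exp μ) := lt_min hb (Real.exp_pos μ)
    filter_upwards [Ioo_mem_nhdsGT hm] with e he
    have he0 : 0 < e := he.1
    have heb : e ≤ b := (he.2.trans_le (min_le_left _ _)).le
    have hel : Real.log e < μ := (Real.log_lt_iff_lt_exp he0).2 (he.2.trans_le (min_le_right _ _))
    have h1 := hKmono (Set.mem_Ioi.2 he0) (Set.mem_Ioi.2 hb) heb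
    simp only at h1
    have h2 : 0 < σ ^ 2 * (e * f e) := by
      have := hfpos e he0
      positivity
    have h3 := hFM e he0
    nlinarith [mul_nonneg (sub_nonneg.2 hel.le) (sub_nonneg.2 h3)]
  have hs' : ∀ b, 0 < b → HasDerivAt s ((V - b) * f b - F b) b := by
    intro b hb
    have h := ((hasDerivAt_id b).const_sub V).mul (hF' b hb)
    rw [hs]
    refine h.congr_deriv ?_
    simp
    ring
  have hs'' : ∀ b, 0 < b → HasDerivAt (deriv s)
      ((V - b) * (-(f b) * (1 + (Real.log b - μ) / σ ^ 2) / b) - 2 * f b) b := by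
    intro b hb
    have h := (((hasDerivAt_id b).const_sub V).mul (hf' b hb)).sub (hF' b hb)
    have h2 : HasDerivAt (fun b => (V - b) * f b - F b)
        ((V - b) * (-(f b) * (1 + (Real.log b - μ) / σ ^ 2) / b) - 2 * f b) b := by
      refine h.congr_deriv ?_
      simp
      ring
    refine h2.congr_of_eventuallyEq ?_
    filter_upwards [Ioi_mem_nhds hb] with y hy
    exact (hs' y hy).deriv
  constructor
  · have hcont : ContinuousOn s (Set.Icc 0 V) := by
      rw [hs]
      refine (by fun_prop : Continuous fun b : ℝ => V - b).continuousOn.mul ?_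
      have h := intervalIntegral.continuousOn_primitive_interval (μ := MeasureTheory.volume)
        (f := f) (a := 0) (b := V) (by
          rw [Set.uIcc_of_le hV.le]
          exact (intervalIntegrable_iff_integrableOn_Icc_of_le hV.le).1 (hint V hV.le))
      rw [Set.uIcc_of_le hV.le] at h
      rw [hF]
      exact h
    obtain ⟨c, hc, hmax⟩ := isCompact_Icc.exists_isMaxOn ⟨0, by simp [hV.le]⟩ hcont
    have hhalf : 0 < s (V / 2) := by
      rw [hs]
      exact mul_pos (by linarith) (hFpos _ (by linarith))
    have hle : s (V / 2) ≤ s c := hmax (show V / 2 ∈ Set.Icc 0 V from ⟨by linarith, by linarith⟩)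
    have hsc : 0 < s c := hhalf.trans_le hle
    refine ⟨c, ⟨?_, ?_⟩, fun b hb => hmax hb⟩
    · refine lt_of_le_of_ne hc.1 ?_
      rintro rfl
      simp [hs, hF0] at hsc
    · refine lt_of_le_of_ne hc.2 ?_
      rintro rfl
      simp [hs] at hsc
  · intro b hb hmin
    have hb0 : 0 < b := hb.1
    have hloc : IsLocalMin s b := hmin.isLocalMin (Ioo_mem_nhds hb.1 hb.2)
    have hd0 : deriv s b = 0 := hloc.deriv_eq_zero
    have hcrit : (V - b) * f b = F b := by
      rw [(hs' b hb0).deriv] at hd0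
      linarith
    have hfb := hfpos b hb0
    have hneg : deriv (deriv s) b < 0 := by
      rw [(hs'' b hb0).deriv]
      have e1 : (V - b) * (-(f b) * (1 + (Real.log b - μ) / σ ^ 2) / b) - 2 * f b
          = -(σ ^ 2 * (b * f b) + (Real.log b - μ) * F b) / (b * σ ^ 2) - F b / b - f b := by
        rw [← hcrit]
        field_simp
        ring
      rw [e1]
      have h1 : 0 ≤ (σ ^ 2 * (b * f b) + (Real.log b - μ) * F b) / (b * σ ^ 2) :=
        div_nonneg (hK b hb0) (by positivity)
      have h2 : 0 < F b / b := div_pos (hFpos b hb0) hb0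
      rw [neg_div]
      linarith
    have hmaxl : IsLocalMax s b :=
      isLocalMax_of_deriv_deriv_neg hneg hd0 (hs' b hb0).continuousAt
    have hconst : s =ᶠ[nhds b] fun _ => s b := by
      filter_upwards [hloc, hmaxl] with y h1 h2
      exact le_antisymm h2 h1
    have h2 := hconst.deriv.deriv_eq
    simp at h2
    linarith
end
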